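/- Let f and g be almost permutations of ℕ such that Index(f) and Index(g) have different parities (Index(f) ≢ Index(g) mod 2). Then α_f and α_g are not conjugate: there is no automorphism γ of the Boolean algebra P(ℕ)/Fin such that γ∘α_f = α_g∘γ. -/

import Mathlib

open Set Filter


/-- An almost permutation of `ℕ`: a bijection between a cofinite subset `dom`
of `ℕ` and a cofinite subset (its range) of `ℕ`.  The function `toFun` carries
arbitrary (junk) values outside of `dom`. -/
structure AlmostPerm where
  dom : Set ℕ
  toFun : ℕ → ℕ
  cofinite_dom : domᶜ.Finite
  injOn : Set.InjOn toFun dom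
  cofinite_ran : (toFun '' dom)ᶜ.Finite

namespace AlmostPerm

/-- The range of an almost permutation. -/
def ran (f : AlmostPerm) : Set ℕ := f.toFun '' f.dom

/-- The image `f[A]` of a set under an almost permutation. -/
def image (f : AlmostPerm) (A : Set ℕ) : Set ℕ := f.toFun '' (A ∩ f.dom)

/-- The (prodigal) index `|ℕ \ dom f| − |ℕ \ ran f|`. -/
noncomputable def index (f : AlmostPerm) : ℤ :=
  (Nat.card ↥(f.domᶜ) : ℤ) - (Nat.card ↥(f.ranᶜ) : ℤ)

/-- The one-step relation: `b = f(a)`. -/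
def step (f : AlmostPerm) (a b : ℕ) : Prop := a ∈ f.dom ∧ f.toFun a = b

/-- The orbit `O_f(n) = {f^k(n) : k ∈ ℤ, f^k(n) defined}`. -/
def orbit (f : AlmostPerm) (n : ℕ) : Set ℕ :=
  {m | Relation.ReflTransGen f.step n m ∨ Relation.ReflTransGen f.step m n}

end AlmostPerm


/-- The Boolean algebra `P(ℕ)/Fin`, realized as germs of `ℕ → Prop` over the
cofinite filter on `ℕ`. -/
abbrev PFin : Type := Filter.Germ (Filter.cofinite : Filter ℕ) Prop

/-- The class `[A]` of a set `A ⊆ ℕ` in `P(ℕ)/Fin`. -/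
def pfinMk (A : Set ℕ) : PFin := Filter.Germ.ofFun (fun n => n ∈ A)

/-!
Up to finitely many points, an almost permutation `f` or its inverse extends to an injection
`F : ℕ → ℕ` missing exactly `|Index f|` points, and the fixed subalgebra of `α_f` consists of the
classes of the sets almost invariant under `F`. The atoms of this subalgebra are the ends of the
infinite orbits of `F`: two for each orbit indexed by `ℤ`, one for each forward orbit of a missed
point. An element of the subalgebra contains both or neither of the ends of all but finitely many
orbits, and every union of orbits is an element; so the involution exchanging the ends of each orbit
is determined, up to finitely many ends, by the isomorphism type of the subalgebra. Two involutions
that differ at finitely many points have the same number of fixed points modulo `2`, whence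
`Index f` modulo `2` is an invariant of the fixed subalgebra.
-/

/-! ### Involutions with finitely many fixed points -/

section Involutions

variable {E : Type*}

theorem exists_infinite_isIndepSet {G : SimpleGraph E} (hG : ∀ x, (G.neighborSet x).Finite)
    {s : Set E} (hs : s.Infinite) : ∃ t ⊆ s, t.Infinite ∧ G.IsIndepSet t := by
  have : Std.Symm fun x y ↦ x ≠ y ∧ ¬ G.Adj x y :=
    ⟨fun _ _ h ↦ ⟨h.1.symm, fun h' ↦ h.2 h'.symm⟩⟩
  obtain ⟨u, hus, hu⟩ := exists_seq_of_forall_finset_exists' (· ∈ s)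
    (fun x y ↦ x ≠ y ∧ ¬ G.Adj x y) fun t _ ↦ by
      have havoid : (⋃ x ∈ t, insert x (G.neighborSet x)).Finite :=
        t.finite_toSet.biUnion fun x _ ↦ (hG x).insert x
      obtain ⟨y, hys, hy⟩ := (hs.sdiff havoid).nonempty
      simp only [mem_iUnion, mem_insert_iff, SimpleGraph.mem_neighborSet, not_exists,
        not_or] at hy
      exact ⟨y, hys, fun x hx ↦ ⟨Ne.symm (hy x hx).1, (hy x hx).2⟩⟩
  have hinj : Function.Injective u := fun m n hmn ↦ by_contra fun hne ↦ (hu hne).1 hmn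
  refine ⟨range u, range_subset_iff.2 hus, infinite_range_of_injective hinj, ?_⟩
  rintro _ ⟨m, rfl⟩ _ ⟨n, rfl⟩ hne
  exact (hu (ne_of_apply_ne u hne)).2

theorem ncard_inter_fixedPoints_modEq_ncard {τ : E → E} (hτ : Function.Involutive τ) {s : Set E}
    (hs : s.Finite) (hmaps : MapsTo τ s s) :
    (s ∩ Function.fixedPoints τ).ncard ≡ s.ncard [MOD 2] := by
  classical
  have := hs.fintype
  let σ : Function.End s := hmaps.restrict τ s s
  have hσ : σ ^ 2 ^ 1 = 1 := funext fun e ↦ Subtype.ext (hτ e)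
  have hfix : s ∩ Function.fixedPoints τ = (↑) '' Function.fixedPoints σ := by
    ext e
    simp [σ, Function.mem_fixedPoints, Function.IsFixedPt, Subtype.ext_iff, and_comm]
  have hcard := Equiv.Perm.card_fixedPoints_modEq hσ
  rw [hfix, ncard_image_of_injective _ Subtype.val_injective, ← Nat.card_coe_set_eq,
    ← Nat.card_coe_set_eq, Nat.card_eq_fintype_card, Nat.card_eq_fintype_card]
  exact hcard.symm

theorem ncard_fixedPoints_modEq_of_finite_ne {τ τ' : E → E} (hτ : Function.Involutive τ)
    (hτ' : Function.Involutive τ') (hfix : (Function.fixedPoints τ).Finite)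
    (hne : {e | τ e ≠ τ' e}.Finite) :
    (Function.fixedPoints τ).ncard ≡ (Function.fixedPoints τ').ncard [MOD 2] := by
  set D := {e | τ e ≠ τ' e} with hD
  have hoff : Function.fixedPoints τ \ D = Function.fixedPoints τ' \ D := by
    ext e
    simp only [hD, Function.fixedPoints, Function.IsFixedPt, Set.mem_sdiff, mem_ofPred_eq, not_not]
    grind
  have hfix' : (Function.fixedPoints τ').Finite :=
    (hne.union hfix).subset fun e he ↦ or_iff_not_imp_left.2 fun heD ↦
      (hoff.symm.subset ⟨he, heD⟩).1
  have hmaps : MapsTo τ D D := fun e he h ↦ he (by rw [hτ] at h; rw [h, hτ', ← h])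
  have hmaps' : MapsTo τ' D D := fun e he h ↦ he (by rw [hτ'] at h; rw [← h, hτ, h])
  calc (Function.fixedPoints τ).ncard
      = (D ∩ Function.fixedPoints τ).ncard + (Function.fixedPoints τ \ D).ncard := by
        rw [inter_comm, ncard_inter_add_ncard_sdiff_eq_ncard _ _ hfix]
    _ ≡ (D ∩ Function.fixedPoints τ').ncard + (Function.fixedPoints τ \ D).ncard [MOD 2] :=
        ((ncard_inter_fixedPoints_modEq_ncard hτ hne hmaps).trans
          (ncard_inter_fixedPoints_modEq_ncard hτ' hne hmaps').symm).add_right _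
    _ = (Function.fixedPoints τ').ncard := by
        rw [hoff, inter_comm, ncard_inter_add_ncard_sdiff_eq_ncard _ _ hfix']

theorem finite_ne_of_forall_mapsTo {τ τ' : E → E} (hτ : Function.Involutive τ)
    (hτ' : Function.Involutive τ') (hfix' : (Function.fixedPoints τ').Finite)
    (h : ∀ S, MapsTo τ S S → {e ∈ S | τ' e ∉ S}.Finite) : {e | τ e ≠ τ' e}.Finite := by
  -- An infinite `t` on which `τ` and `τ'` differ can be thinned out, by choosing it independent in
  -- a locally finite graph, until `τ'` maps all of `t` outside the `τ`-closure of `t`.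
  by_contra hinf
  let G : SimpleGraph E := .fromRel fun x y ↦ τ' x = y ∨ τ' x = τ y
  have hG (x : E) : (G.neighborSet x).Finite := by
    refine (toFinite {τ' x, τ (τ' x), τ' (τ x)}).subset ?_
    rintro y ⟨-, (hxy | hxy) | hyx | hyx⟩
    · exact .inl hxy.symm
    · exact .inr (.inl (by rw [hxy, hτ]))
    · exact .inl (by rw [← hyx, hτ'])
    · exact .inr (.inr (by rw [← hyx, hτ']; rfl))
  obtain ⟨t, htD, htinf, htG⟩ := exists_infinite_isIndepSet hG (Set.Infinite.sdiff hinf hfix')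
  have hmaps : MapsTo τ (t ∪ τ '' t) (t ∪ τ '' t) := by
    rintro _ (he | ⟨e, he, rfl⟩)
    · exact .inr (mem_image_of_mem τ he)
    · exact .inl (by rwa [hτ])
  refine htinf ((h _ hmaps).subset fun e he ↦ ⟨.inl he, ?_⟩)
  obtain ⟨hne : τ e ≠ τ' e, hfix : τ' e ≠ e⟩ := htD he
  rintro (hmem | ⟨y, hy, hyτ⟩)
  · exact htG he hmem hfix.symm ⟨hfix.symm, .inl (.inl rfl)⟩
  · have hey : e ≠ y := fun hey ↦ hne (hey ▸ hyτ)
    exact htG he hy hey ⟨hey, .inl (.inr hyτ.symm)⟩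

end Involutions

/-! ### Pairings of atoms -/

section AtomPairing

variable {B C E E' : Type*} [PartialOrder B] [OrderBot B] [PartialOrder C] [OrderBot C]

/-- An involutive pairing `τ` of the atoms of `B`, indexed by `ε : E → B`, that the order of `B`
remembers up to finitely many atoms: every element of `B` separates finitely many atoms from their
partners, and every set of atoms closed under `τ` is the set of atoms below some element. Fixed
points of `τ` are the unpaired atoms. -/
structure IsAtomPairing (ε : E → B) (τ : E → E) : Prop where
  injective : Function.Injective ε
  range_eq : range ε = {a | IsAtom a}
  involutive : Function.Involutive τ
  finite_split (x : B) : {e | ε e ≤ x ∧ ¬ ε (τ e) ≤ x}.Finite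
  exists_le_iff_mem {S : Set E} (hS : MapsTo τ S S) : ∃ x, ∀ e, ε e ≤ x ↔ e ∈ S

namespace IsAtomPairing

theorem map {ε : E → B} {τ : E → E} (h : IsAtomPairing ε τ) (Φ : B ≃o C) :
    IsAtomPairing (Φ ∘ ε) τ where
  injective := Φ.injective.comp h.injective
  range_eq := by
    ext a
    rw [range_comp, h.range_eq, Φ.image_eq_preimage_symm]
    exact Φ.symm.isAtom_iff a
  involutive := h.involutive
  finite_split x := by
    simpa only [Function.comp_apply, ← Φ.le_symm_apply] using h.finite_split (Φ.symm x)
  exists_le_iff_mem hS := by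
    obtain ⟨x, hx⟩ := h.exists_le_iff_mem hS
    exact ⟨Φ x, fun e ↦ by simpa only [Function.comp_apply, Φ.le_iff_le] using hx e⟩

theorem reindex {ε : E → B} {τ : E → E} (h : IsAtomPairing ε τ) (φ : E' ≃ E) :
    IsAtomPairing (ε ∘ φ) (φ.symm ∘ τ ∘ φ) where
  injective := h.injective.comp φ.injective
  range_eq := by rw [φ.surjective.range_comp, h.range_eq]
  involutive e := by simp [h.involutive (φ e)]
  finite_split x := by
    simpa using (h.finite_split x).preimage φ.injective.injOn
  exists_le_iff_mem {S} hS := by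
    have hmaps : MapsTo τ (φ.symm ⁻¹' S) (φ.symm ⁻¹' S) := fun e he ↦ by
      simpa using hS he
    obtain ⟨x, hx⟩ := h.exists_le_iff_mem hmaps
    exact ⟨x, fun e ↦ by simpa using hx (φ e)⟩

theorem ncard_fixedPoints_modEq_of_same_atoms {ε : E → B} {τ τ' : E → E} (h : IsAtomPairing ε τ)
    (h' : IsAtomPairing ε τ') (hfix : (Function.fixedPoints τ).Finite)
    (hfix' : (Function.fixedPoints τ').Finite) :
    (Function.fixedPoints τ).ncard ≡ (Function.fixedPoints τ').ncard [MOD 2] := by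
  refine ncard_fixedPoints_modEq_of_finite_ne h.involutive h'.involutive hfix <|
    finite_ne_of_forall_mapsTo h.involutive h'.involutive hfix' fun S hS ↦ ?_
  obtain ⟨x, hx⟩ := h.exists_le_iff_mem hS
  simpa only [hx] using h'.finite_split x

theorem ncard_fixedPoints_modEq {ε : E → B} {τ : E → E} {ε' : E' → C} {τ' : E' → E'}
    (h : IsAtomPairing ε τ) (h' : IsAtomPairing ε' τ') (Φ : B ≃o C)
    (hfix : (Function.fixedPoints τ).Finite) (hfix' : (Function.fixedPoints τ').Finite) :
    (Function.fixedPoints τ).ncard ≡ (Function.fixedPoints τ').ncard [MOD 2] := by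
  have hΦ := h.map Φ
  let φ : E ≃ E' := (Equiv.ofInjective _ hΦ.injective).trans <|
    (Equiv.setCongr (hΦ.range_eq.trans h'.range_eq.symm)).trans
      (Equiv.ofInjective _ h'.injective).symm
  have hφ : ε' ∘ φ = Φ ∘ ε := funext fun e ↦ Equiv.apply_ofInjective_symm h'.injective _
  have hfixφ : Function.fixedPoints (φ.symm ∘ τ' ∘ φ) = φ ⁻¹' Function.fixedPoints τ' := by
    ext e
    simp [Function.fixedPoints, Function.IsFixedPt, φ.symm_apply_eq]
  have hcard := hΦ.ncard_fixedPoints_modEq_of_same_atoms (hφ ▸ h'.reindex φ) hfix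
    (hfixφ ▸ hfix'.preimage φ.injective.injOn)
  rwa [hfixφ, ncard_preimage_of_injective_subset_range φ.injective
    (φ.range_eq_univ ▸ subset_univ _)] at hcard

end IsAtomPairing

end AtomPairing

/-! ### Orbits of an injection -/

section Lines

variable {X : Type*}

theorem zpow_apply_injective_of_notMem_periodicPts {σ : Equiv.Perm X} {x : X}
    (hx : x ∉ Function.periodicPts σ) : Function.Injective fun z : ℤ ↦ (σ ^ z) x := by
  intro z w (hzw : (σ ^ z) x = (σ ^ w) x)
  have hfix : (σ ^ (-w + z)) • x = x := by
    rw [Equiv.Perm.smul_def, zpow_add, Equiv.Perm.mul_apply, hzw, ← Equiv.Perm.mul_apply,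
      ← zpow_add, neg_add_cancel, zpow_zero, Equiv.Perm.one_apply]
  have hperiod : Function.minimalPeriod (fun y ↦ σ • y) x = 0 :=
    Function.minimalPeriod_eq_zero_of_notMem_periodicPts hx
  rw [MulAction.zpow_smul_eq_iff_minimalPeriod_dvd, hperiod] at hfix
  lia

theorem exists_transversal_notMem_periodicPts (σ : Equiv.Perm X) :
    ∃ Q : Set X, (Function.Injective2 fun (q : Q) (z : ℤ) ↦ (σ ^ z) (q : X)) ∧
      ∀ x, x ∈ Function.periodicPts σ ∨ ∃ (q : Q) (z : ℤ), (σ ^ z) (q : X) = x := by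
  let rep (x : X) : X := (Quotient.mk (Equiv.Perm.SameCycle.setoid σ) x).out
  have hrep (x : X) : σ.SameCycle (rep x) x :=
    Quotient.exact (s := Equiv.Perm.SameCycle.setoid σ) (Quotient.out_eq _)
  refine ⟨{x | rep x = x ∧ x ∉ Function.periodicPts σ}, ?_, fun x ↦ ?_⟩
  · intro q q' z w (h : (σ ^ z) (q : X) = (σ ^ w) (q' : X))
    have hsame : σ.SameCycle q q' := by
      rw [← Equiv.Perm.sameCycle_zpow_left (n := z), h, Equiv.Perm.sameCycle_zpow_left]
    have hqq' : q = q' := Subtype.ext <| by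
      rw [← q.2.1, ← q'.2.1]
      exact congrArg Quotient.out (Quotient.sound hsame)
    subst hqq'
    exact ⟨rfl, zpow_apply_injective_of_notMem_periodicPts q.2.2 h⟩
  · obtain ⟨z, hz⟩ := hrep x
    refine or_iff_not_imp_left.2 fun hx ↦ ⟨⟨rep x, ?_, ?_⟩, z, hz⟩
    · exact congrArg Quotient.out (Quotient.sound (hrep x))
    · rintro ⟨n, hn, hper⟩
      have hcomm : Function.Semiconj (σ ^ z : Equiv.Perm X) σ σ := fun y ↦ by
        rw [← Equiv.Perm.mul_apply, ← Equiv.Perm.mul_apply, (Commute.refl σ).zpow_left]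
      exact hx ⟨n, hn, hz ▸ hper.map hcomm⟩

/-- `⋂ k, range F^[k]` is the set of points whose backward orbit under `F` never stops. -/
theorem bijOn_iInter_range_iterate {F : X → X} (hF : Function.Injective F) :
    BijOn F (⋂ k, range F^[k]) (⋂ k, range F^[k]) := by
  refine ⟨fun x hx ↦ ?_, hF.injOn, fun x hx ↦ ?_⟩
  · refine mem_iInter.2 fun k ↦ ?_
    obtain ⟨y, rfl⟩ := mem_iInter.1 hx k
    exact ⟨F y, (Function.Commute.iterate_self F k y)⟩
  · obtain ⟨y, rfl⟩ := mem_iInter.1 hx 1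
    refine ⟨y, mem_iInter.2 fun k ↦ ?_, rfl⟩
    obtain ⟨z, hz⟩ := mem_iInter.1 hx (k + 1)
    rw [Function.iterate_succ_apply'] at hz
    exact ⟨z, hF hz⟩

theorem exists_iterate_eq_of_notMem_iInter_range_iterate {F : X → X} {x : X}
    (hx : x ∉ ⋂ k, range F^[k]) : ∃ u ∉ range F, ∃ k, F^[k] u = x := by
  classical
  have hex : ∃ k, x ∉ range F^[k] := by simpa only [mem_iInter, not_forall] using hx
  obtain ⟨k, hk⟩ : ∃ k, Nat.find hex = k + 1 :=
    Nat.exists_eq_succ_of_ne_zero fun h0 ↦ (h0 ▸ Nat.find_spec hex) ⟨x, rfl⟩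
  obtain ⟨u, hu⟩ : x ∈ range F^[k] := not_not.1 (Nat.find_min hex (by lia))
  refine ⟨u, ?_, k, hu⟩
  rintro ⟨v, rfl⟩
  exact (hk ▸ Nat.find_spec hex) ⟨v, hu⟩

end Lines

universe u

/-- A parametrization of the orbits of an injective self-map `F` that are not finite cycles. Such an
orbit is either a line, parametrized by `ℤ`, or the forward orbit of a point outside the range of
`F`; only the lines need to be given. -/
structure LineDecomposition {X : Type u} (F : X → X) where
  Line : Type u
  point : Line → ℤ → X
  injective : Function.Injective F
  map_point (q : Line) (z : ℤ) : F (point q z) = point q (z + 1)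
  point_injective : Function.Injective2 point
  cover (x : X) : x ∈ Function.periodicPts F ∨ (∃ q z, point q z = x) ∨
    ∃ u ∉ range F, ∃ k, F^[k] u = x

theorem nonempty_lineDecomposition {X : Type u} {F : X → X} (hF : Function.Injective F) :
    Nonempty (LineDecomposition F) := by
  let σ : Equiv.Perm ↥(⋂ k, range F^[k]) := (bijOn_iInter_range_iterate hF).equiv F
  have hσ (x : ↥(⋂ k, range F^[k])) : F x = σ x := rfl
  obtain ⟨Q, hQ, hcover⟩ := exists_transversal_notMem_periodicPts σ
  refine ⟨⟨Q, fun q z ↦ (σ ^ z) (q : ↥(⋂ k, range F^[k])), hF, fun q z ↦ ?_,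
    fun q q' z w h ↦ hQ (Subtype.ext h), fun x ↦ ?_⟩⟩
  · rw [hσ, ← Equiv.Perm.mul_apply, ← zpow_one_add, add_comm]
  · by_cases hx : x ∈ ⋂ k, range F^[k]
    · rcases hcover ⟨x, hx⟩ with ⟨n, hn, hper⟩ | ⟨q, z, hqz⟩
      · exact .inl ⟨n, hn, hper.map (g := Subtype.val) (fb := F) fun _ ↦ rfl⟩
      · exact .inr (.inl ⟨q, z, congrArg Subtype.val hqz⟩)
    · exact .inr (.inr (exists_iterate_eq_of_notMem_iInter_range_iterate hx))

/-! ### Almost invariant sets and ends of orbits -/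

section AlmostInvariant

variable {X : Type*} {F : X → X} {A B : Set X}

/-- Almost invariance of `A` under `F`: the sets `A` and `F ⁻¹' A` differ by finitely many
points. For almost permutations this says that `[A]` is fixed by the induced automorphism. -/
def AlmostInvariant (F : X → X) (A : Set X) : Prop := ∀ᶠ x in cofinite, F x ∈ A ↔ x ∈ A

theorem AlmostInvariant.inter (hA : AlmostInvariant F A) (hB : AlmostInvariant F B) :
    AlmostInvariant F (A ∩ B) := by
  filter_upwards [hA, hB] with x hxA hxB using and_congr hxA hxB

theorem almostInvariant_of_apply_mem_iff (hA : ∀ x, F x ∈ A ↔ x ∈ A) : AlmostInvariant F A :=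
  Eventually.of_forall hA

/-- A ray of `F`: an injective sequence that follows `F` forwards or backwards. -/
structure IsRay (F : X → X) (p : ℕ → X) : Prop where
  injective : Function.Injective p
  forward_or_backward : (∀ k, F (p k) = p (k + 1)) ∨ ∀ k, F (p (k + 1)) = p k

namespace IsRay

variable {p : ℕ → X}

theorem almostInvariant_range (hp : IsRay F p) (hF : Function.Injective F) :
    AlmostInvariant F (range p) := by
  have hend : ∀ᶠ x in cofinite, F x ≠ p 0 ∧ x ≠ p 0 :=
    (hF.tendsto_cofinite.eventually (eventually_cofinite_ne (p 0))).and (eventually_cofinite_ne _)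
  filter_upwards [hend] with x ⟨hFx, hx⟩
  rcases hp.forward_or_backward with h | h
  · refine ⟨?_, fun ⟨k, hk⟩ ↦ ⟨k + 1, hk ▸ (h k).symm⟩⟩
    rintro ⟨_ | k, hk⟩
    · exact absurd hk.symm hFx
    · exact ⟨k, hF ((h k).trans hk)⟩
  · refine ⟨fun ⟨k, hk⟩ ↦ ⟨k + 1, hF ((h k).trans hk)⟩, ?_⟩
    rintro ⟨_ | k, hk⟩
    · exact absurd hk.symm hx
    · exact ⟨k, hk ▸ (h k).symm⟩

theorem eventually_mem_succ_iff (hp : IsRay F p) (hA : AlmostInvariant F A) :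
    ∀ᶠ k in atTop, p (k + 1) ∈ A ↔ p k ∈ A := by
  have hp_tendsto : Tendsto p atTop cofinite :=
    Nat.cofinite_eq_atTop ▸ hp.injective.tendsto_cofinite
  rcases hp.forward_or_backward with h | h
  · filter_upwards [hp_tendsto.eventually hA] with k hk
    rwa [← h]
  · filter_upwards [(hp_tendsto.comp (tendsto_add_atTop_nat 1)).eventually hA] with k hk
    simp only [Function.comp_apply, h] at hk
    exact hk.symm

theorem eventually_mem_or_eventually_notMem (hp : IsRay F p) (hA : AlmostInvariant F A) :
    (∀ᶠ k in atTop, p k ∈ A) ∨ ∀ᶠ k in atTop, p k ∉ A := by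
  obtain ⟨K, hK⟩ := eventually_atTop.1 (hp.eventually_mem_succ_iff hA)
  have hconst (k : ℕ) (hk : K ≤ k) : p k ∈ A ↔ p K ∈ A := by
    induction k, hk using Nat.le_induction with
    | base => rfl
    | succ k hk ih => rw [hK k hk, ih]
  by_cases hpK : p K ∈ A
  · exact .inl (eventually_atTop.2 ⟨K, fun k hk ↦ (hconst k hk).2 hpK⟩)
  · exact .inr (eventually_atTop.2 ⟨K, fun k hk ↦ mt (hconst k hk).1 hpK⟩)

theorem eventually_mem_of_infinite (hp : IsRay F p) (hA : AlmostInvariant F A)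
    (hinf : (A ∩ range p).Infinite) : ∀ᶠ k in atTop, p k ∈ A := by
  refine (hp.eventually_mem_or_eventually_notMem hA).resolve_right fun h ↦ hinf ?_
  rw [← Nat.cofinite_eq_atTop] at h
  refine (h.image p).subset ?_
  rintro _ ⟨hpA, k, rfl⟩
  exact ⟨k, fun hk ↦ hk hpA, rfl⟩

end IsRay

/-- `Quot (F · = ·)` is the space of orbits of `F`. -/
theorem mem_of_quot_mk_eq {S : Set X} (hS : ∀ x, F x ∈ S ↔ x ∈ S) {x y : X}
    (hxy : Quot.mk (F · = ·) x = Quot.mk (F · = ·) y) (hx : x ∈ S) : y ∈ S := by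
  let inS : Quot (F · = ·) → Prop :=
    Quot.lift (· ∈ S) fun x y h ↦ propext (h ▸ (hS x).symm)
  exact (congrArg inS hxy).mp hx

theorem AlmostInvariant.exists_infinite_sdiff_infinite (hA : AlmostInvariant F A)
    (hinf : (Quot.mk (F · = ·) '' A).Infinite) :
    ∃ B ⊆ A, AlmostInvariant F B ∧ B.Infinite ∧ (A \ B).Infinite := by
  obtain ⟨T, U, hTU, hdisj, hcard⟩ := hinf.exists_union_disjoint_cardinal_eq_of_infinite
  obtain ⟨φ⟩ := Cardinal.eq.1 hcard
  have hTU_inf : T.Infinite ∧ U.Infinite := by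
    rw [← hTU, infinite_union] at hinf
    exact hinf.elim (fun h ↦ ⟨h, mt φ.set_finite_iff.2 h⟩) fun h ↦ ⟨mt φ.set_finite_iff.1 h, h⟩
  have himage {V : Set (Quot (F · = ·))} (hV : V ⊆ Quot.mk (F · = ·) '' A) (hVinf : V.Infinite) :
      (A ∩ Quot.mk (F · = ·) ⁻¹' V).Infinite := by
    refine .of_image (Quot.mk (F · = ·)) ?_
    rwa [image_inter_preimage, inter_eq_right.2 hV]
  refine ⟨A ∩ Quot.mk (F · = ·) ⁻¹' T, inter_subset_left, hA.inter ?_,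
    himage (hTU ▸ subset_union_left) hTU_inf.1,
    (himage (hTU ▸ subset_union_right) hTU_inf.2).mono ?_⟩
  · refine almostInvariant_of_apply_mem_iff fun x ↦ ?_
    rw [mem_preimage, mem_preimage, Quot.sound (r := (F · = ·)) (rfl : F x = F x)]
  · exact fun x ⟨hxA, hxU⟩ ↦ ⟨hxA, fun hxT ↦ disjoint_left.1 hdisj hxT.2 hxU⟩

theorem finite_quot_fiber_of_mem_periodicPts (hF : Function.Injective F) {x : X}
    (hx : x ∈ Function.periodicPts F) :
    {y | Quot.mk (F · = ·) x = Quot.mk (F · = ·) y}.Finite := by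
  obtain ⟨n, hn, hper⟩ := hx
  have hfin : (range fun k ↦ F^[k] x).Finite := by
    refine ((finite_lt_nat n).image fun k ↦ F^[k] x).subset ?_
    rintro _ ⟨k, rfl⟩
    exact ⟨k % n, Nat.mod_lt k hn, hper.iterate_mod_apply k⟩
  refine hfin.subset fun y hy ↦ mem_of_quot_mk_eq (fun z ↦ ⟨?_, ?_⟩) hy ⟨0, rfl⟩
  · rintro ⟨k, hk⟩
    refine ⟨k + (n - 1), hF ?_⟩
    beta_reduce
    rw [← Function.iterate_succ_apply' F, ← hk, Nat.succ_eq_add_one,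
      show k + (n - 1) + 1 = k + n by lia, Function.iterate_add_apply, hper]
  · rintro ⟨k, rfl⟩
    exact ⟨k + 1, Function.iterate_succ_apply' F k x⟩

end AlmostInvariant

namespace LineDecomposition

variable {X : Type u} {F : X → X} (D : LineDecomposition F)

/-- The ends of `F`: every line has a forward and a backward end, and every point outside the
range of `F` starts a forward orbit with a single end. -/
abbrev End : Type u := (D.Line × Bool) ⊕ ↥(range F)ᶜ

/-- The ray converging to an end; the backward ray of a line starts at position `-1`, which makes
distinct rays disjoint. -/
def ray : D.End → ℕ → X
  | .inl (q, true), k => D.point q k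
  | .inl (q, false), k => D.point q (Int.negSucc k)
  | .inr u, k => F^[k] u

/-- The orbit that an end belongs to. -/
def orbit : D.End → Set X
  | .inl (q, _) => range (D.point q)
  | .inr u => range fun k ↦ F^[k] u

/-- The other end of the same orbit; a one-ended orbit has its end as its own opposite. -/
def opposite : D.End → D.End := Sum.map (Prod.map id not) id

theorem opposite_involutive : Function.Involutive D.opposite := by
  rintro (⟨q, b⟩ | u) <;> simp [opposite]

theorem fixedPoints_opposite : Function.fixedPoints D.opposite = range Sum.inr := by
  ext (⟨q, b⟩ | u) <;> simp [opposite, Function.mem_fixedPoints, Function.IsFixedPt]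

theorem point_ne_iterate (q : D.Line) (z : ℤ) {u : X} (hu : u ∉ range F) (k : ℕ) :
    D.point q z ≠ F^[k] u := by
  induction k generalizing z with
  | zero =>
    rintro rfl
    exact hu ⟨D.point q (z - 1), by rw [D.map_point, sub_add_cancel]⟩
  | succ k ih =>
    intro h
    refine ih (z - 1) (D.injective ?_)
    rw [D.map_point, sub_add_cancel, h, Function.iterate_succ_apply']

theorem iterate_injective2_compl_range (hF : Function.Injective F) :
    Function.Injective2 fun (u : ↥(range F)ᶜ) (k : ℕ) ↦ F^[k] u := by
  intro u v k l h
  induction k generalizing l with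
  | zero =>
    cases l with
    | zero => exact ⟨Subtype.ext h, rfl⟩
    | succ l => exact absurd ⟨F^[l] v, (h.trans (Function.iterate_succ_apply' F l v)).symm⟩ u.2
  | succ k ih =>
    cases l with
    | zero => exact absurd ⟨F^[k] u, (Function.iterate_succ_apply' F k u).symm.trans h⟩ v.2
    | succ l =>
      obtain ⟨huv, hkl⟩ := ih (hF (by simpa only [Function.iterate_succ_apply'] using h))
      exact ⟨huv, congrArg Nat.succ hkl⟩

theorem ray_injective2 : Function.Injective2 D.ray := by
  have hline {q q' : D.Line} {z w : ℤ} (h : D.point q z = D.point q' w) : q = q' ∧ z = w :=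
    D.point_injective h
  rintro (⟨q, _ | _⟩ | u) (⟨q', _ | _⟩ | u') k l h
  · exact ⟨by rw [(hline h).1], Int.negSucc.inj (hline h).2⟩
  · exact absurd (hline h).2 (by lia)
  · exact absurd h (D.point_ne_iterate q _ u'.2 l)
  · exact absurd (hline h).2 (by lia)
  · exact ⟨by rw [(hline h).1], Int.ofNat.inj (hline h).2⟩
  · exact absurd h (D.point_ne_iterate q _ u'.2 l)
  · exact absurd h.symm (D.point_ne_iterate q' _ u.2 k)
  · exact absurd h.symm (D.point_ne_iterate q' _ u.2 k)
  · exact (iterate_injective2_compl_range D.injective h).imp_left (congrArg Sum.inr)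

theorem isRay_ray (e : D.End) : IsRay F (D.ray e) where
  injective := D.ray_injective2.right e
  forward_or_backward := by
    rcases e with ⟨q, _ | _⟩ | u
    · exact .inr fun k ↦ D.map_point q _
    · exact .inl fun k ↦ D.map_point q k
    · exact .inl fun k ↦ (Function.iterate_succ_apply' F k u).symm

theorem orbit_eq_range_union_range (e : D.End) :
    D.orbit e = range (D.ray e) ∪ range (D.ray (D.opposite e)) := by
  have hline (q : D.Line) : range (D.point q) =
      range (fun k : ℕ ↦ D.point q k) ∪ range fun k : ℕ ↦ D.point q (Int.negSucc k) := by
    ext x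
    refine ⟨?_, ?_⟩
    · rintro ⟨k | k, rfl⟩
      exacts [.inl ⟨k, rfl⟩, .inr ⟨k, rfl⟩]
    · rintro (⟨k, rfl⟩ | ⟨k, rfl⟩) <;> exact mem_range_self _
  rcases e with ⟨q, _ | _⟩ | u
  · exact (hline q).trans (union_comm _ _)
  · exact hline q
  · exact (union_self _).symm

theorem apply_mem_orbit_iff (e : D.End) (x : X) : F x ∈ D.orbit e ↔ x ∈ D.orbit e := by
  rcases e with ⟨q, b⟩ | u
  · refine ⟨fun ⟨z, hz⟩ ↦ ⟨z - 1, D.injective ?_⟩, fun ⟨z, hz⟩ ↦ ⟨z + 1, ?_⟩⟩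
    · rw [D.map_point, sub_add_cancel, hz]
    · rw [← D.map_point, hz]
  · refine ⟨?_, fun ⟨k, hk⟩ ↦ ⟨k + 1, hk ▸ Function.iterate_succ_apply' F k u⟩⟩
    rintro ⟨_ | k, hk⟩
    · exact absurd ⟨x, hk.symm⟩ u.2
    · exact ⟨k, D.injective ((Function.iterate_succ_apply' F k u).symm.trans hk)⟩

theorem ray_mem_orbit (e : D.End) (k : ℕ) : D.ray e k ∈ D.orbit e :=
  D.orbit_eq_range_union_range e ▸ .inl (mem_range_self k)

theorem orbit_opposite (e : D.End) : D.orbit (D.opposite e) = D.orbit e := by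
  rcases e with ⟨q, b⟩ | u <;> rfl

theorem eq_or_eq_opposite_of_ray_mem_orbit {e e' : D.End} {k : ℕ} (h : D.ray e k ∈ D.orbit e') :
    e = e' ∨ e = D.opposite e' := by
  rw [orbit_eq_range_union_range] at h
  rcases h with ⟨l, hl⟩ | ⟨l, hl⟩
  · exact .inl (D.ray_injective2 hl).1.symm
  · exact .inr (D.ray_injective2 hl).1.symm

theorem finite_setOf_mem_orbit (x : X) : {e | x ∈ D.orbit e}.Finite := by
  rcases eq_empty_or_nonempty {e | x ∈ D.orbit e} with hempty | ⟨e₀, he₀⟩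
  · exact hempty ▸ finite_empty
  obtain ⟨e₁, k, rfl⟩ : ∃ e₁ k, D.ray e₁ k = x := by
    rw [mem_ofPred_eq, orbit_eq_range_union_range] at he₀
    exact he₀.elim (fun ⟨k, hk⟩ ↦ ⟨_, k, hk⟩) fun ⟨k, hk⟩ ↦ ⟨_, k, hk⟩
  refine (toFinite {e₁, D.opposite e₁}).subset fun e he ↦ ?_
  rcases D.eq_or_eq_opposite_of_ray_mem_orbit he with rfl | rfl
  · exact .inl rfl
  · exact .inr (D.opposite_involutive e).symm

theorem mem_iff_mem_of_mem_orbit {A : Set X} {e : D.End} (hA : ∀ x ∈ D.orbit e, F x ∈ A ↔ x ∈ A)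
    {x y : X} (hx : x ∈ D.orbit e) (hy : y ∈ D.orbit e) : x ∈ A ↔ y ∈ A := by
  rcases e with ⟨q, b⟩ | u
  · have hstep (z : ℤ) : D.point q (z + 1) ∈ A ↔ D.point q z ∈ A := by
      rw [← D.map_point, hA _ (mem_range_self z)]
    have hconst : Function.Periodic (fun z ↦ D.point q z ∈ A) 1 := fun z ↦ propext (hstep z)
    obtain ⟨⟨z, rfl⟩, w, rfl⟩ := And.intro hx hy
    simpa using ((hconst.int_mul_eq z).trans (hconst.int_mul_eq w).symm).to_iff
  · have hconst (k : ℕ) : F^[k] u ∈ A ↔ (u : X) ∈ A := by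
      induction k with
      | zero => rfl
      | succ k ih => rw [Function.iterate_succ_apply', hA _ (mem_range_self k), ih]
    obtain ⟨⟨k, rfl⟩, l, rfl⟩ := And.intro hx hy
    exact (hconst k).trans (hconst l).symm

theorem finite_setOf_eventually_mem_not_opposite {A : Set X} (hA : AlmostInvariant F A) :
    {e | (∀ᶠ k in atTop, D.ray e k ∈ A) ∧
      ¬ ∀ᶠ k in atTop, D.ray (D.opposite e) k ∈ A}.Finite := by
  refine (Set.Finite.biUnion hA fun x _ ↦ D.finite_setOf_mem_orbit x).subset ?_
  rintro e ⟨he, hopp⟩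
  by_contra hgood
  simp only [mem_iUnion, not_exists, mem_ofPred_eq] at hgood
  have horbit : ∀ x ∈ D.orbit e, F x ∈ A ↔ x ∈ A :=
    fun x hx ↦ by_contra fun h ↦ hgood x h hx
  obtain ⟨k, hk⟩ := he.exists
  refine hopp (Eventually.of_forall fun l ↦ ?_)
  have hl : D.ray (D.opposite e) l ∈ D.orbit e :=
    D.orbit_opposite e ▸ D.ray_mem_orbit (D.opposite e) l
  exact (D.mem_iff_mem_of_mem_orbit horbit (D.ray_mem_orbit e k) hl).1 hk

theorem exists_almostInvariant_forall_ray_mem_iff {S : Set D.End} (hS : MapsTo D.opposite S S) :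
    ∃ A, AlmostInvariant F A ∧ ∀ e k, D.ray e k ∈ A ↔ e ∈ S := by
  refine ⟨⋃ e ∈ S, D.orbit e, almostInvariant_of_apply_mem_iff fun x ↦ ?_, fun e k ↦ ?_⟩
  · simp only [mem_iUnion, apply_mem_orbit_iff]
  · simp only [mem_iUnion]
    refine ⟨fun ⟨e', he', hk⟩ ↦ ?_, fun he ↦ ⟨e, he, D.ray_mem_orbit e k⟩⟩
    rcases D.eq_or_eq_opposite_of_ray_mem_orbit hk with rfl | rfl
    · exact he'
    · exact hS he'

theorem mem_periodicPts_or_exists_mem_orbit (x : X) :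
    x ∈ Function.periodicPts F ∨ ∃ e, x ∈ D.orbit e := by
  rcases D.cover x with hx | ⟨q, z, rfl⟩ | ⟨u, hu, k, rfl⟩
  · exact .inl hx
  · exact .inr ⟨.inl (q, true), z, rfl⟩
  · exact .inr ⟨.inr ⟨u, hu⟩, k, rfl⟩

theorem exists_eventually_ray_mem {A : Set X} (hA : AlmostInvariant F A) (hinf : A.Infinite)
    (hfin : (Quot.mk (F · = ·) '' A).Finite) : ∃ e, ∀ᶠ k in atTop, D.ray e k ∈ A := by
  obtain ⟨x, hx⟩ : ∃ x,
      (A ∩ {y | Quot.mk (F · = ·) x = Quot.mk (F · = ·) y}).Infinite := by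
    by_contra! hfiber
    refine hinf ((hfin.biUnion (t := fun c ↦ A ∩ {y | c = Quot.mk (F · = ·) y}) ?_).subset
      fun x hx ↦ mem_biUnion (mem_image_of_mem _ hx) ⟨hx, rfl⟩)
    rintro _ ⟨x, -, rfl⟩
    exact hfiber x
  obtain ⟨e, he⟩ := (D.mem_periodicPts_or_exists_mem_orbit x).resolve_left fun hper ↦
    hx ((finite_quot_fiber_of_mem_periodicPts D.injective hper).subset inter_subset_right)
  have hsub : A ∩ {y | Quot.mk (F · = ·) x = Quot.mk (F · = ·) y} ⊆
      A ∩ range (D.ray e) ∪ A ∩ range (D.ray (D.opposite e)) := by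
    rw [← inter_union_distrib_left, ← D.orbit_eq_range_union_range]
    exact inter_subset_inter_right A fun y hy ↦ mem_of_quot_mk_eq (D.apply_mem_orbit_iff e) hy he
  rcases infinite_union.1 (hx.mono hsub) with h | h
  · exact ⟨e, (D.isRay_ray e).eventually_mem_of_infinite hA h⟩
  · exact ⟨_, (D.isRay_ray _).eventually_mem_of_infinite hA h⟩

end LineDecomposition

/-! ### The subalgebra of almost invariant classes -/

section PFin

variable {A B : Set ℕ}

theorem pfinMk_surjective : Function.Surjective pfinMk := fun x ↦
  Filter.Germ.inductionOn x fun P ↦ ⟨{n | P n}, rfl⟩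

theorem pfinMk_eq_iff : pfinMk A = pfinMk B ↔ ∀ᶠ n in cofinite, n ∈ A ↔ n ∈ B :=
  Filter.Germ.coe_eq.trans eventuallyEq_set

theorem pfinMk_le_iff : pfinMk A ≤ pfinMk B ↔ (A \ B).Finite := by
  have hsdiff : A \ B = {n | ¬ (n ∈ A → n ∈ B)} := by ext; simp
  rw [hsdiff]
  rfl

theorem pfinMk_eq_bot_iff : pfinMk A = ⊥ ↔ A.Finite := by
  refine (pfinMk_eq_iff (B := ∅)).trans ?_
  simp only [mem_empty_iff_false, iff_false, eventually_cofinite, not_not]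
  rfl

theorem pfinMk_range_le_iff {p : ℕ → ℕ} (hp : Function.Injective p) :
    pfinMk (range p) ≤ pfinMk A ↔ ∀ᶠ k in atTop, p k ∈ A := by
  have himage : range p \ A = p '' {k | p k ∉ A} := by
    ext
    simp only [Set.mem_sdiff, mem_range, mem_image, mem_ofPred_eq]
    grind
  rw [pfinMk_le_iff, himage, finite_image_iff hp.injOn, ← Nat.cofinite_eq_atTop,
    eventually_cofinite]

end PFin

/-- The classes of the sets almost invariant under `F`, a subalgebra of `P(ℕ)/Fin` of which only
the partial order is used. -/
def invariantClasses (F : ℕ → ℕ) : Set PFin := pfinMk '' {A | AlmostInvariant F A}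

section InvariantClasses

variable {F : ℕ → ℕ} {A B : Set ℕ}

/-- The class of an almost invariant set, as an element of the invariant subalgebra. -/
def AlmostInvariant.toClass (hA : AlmostInvariant F A) : invariantClasses F :=
  ⟨pfinMk A, mem_image_of_mem pfinMk hA⟩

theorem exists_toClass_eq (x : invariantClasses F) :
    ∃ (A : Set ℕ) (hA : AlmostInvariant F A), hA.toClass = x :=
  let ⟨A, hA, hx⟩ := x.2
  ⟨A, hA, Subtype.ext hx⟩

theorem bot_mem_invariantClasses : ⊥ ∈ invariantClasses F :=
  ⟨∅, almostInvariant_of_apply_mem_iff fun _ ↦ Iff.rfl, pfinMk_eq_bot_iff.2 finite_empty⟩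

instance : OrderBot ↥(invariantClasses F) := Subtype.orderBot bot_mem_invariantClasses

theorem AlmostInvariant.toClass_eq_bot_iff (hA : AlmostInvariant F A) :
    hA.toClass = ⊥ ↔ A.Finite :=
  (Subtype.mk_eq_bot_iff bot_mem_invariantClasses _).trans pfinMk_eq_bot_iff

theorem AlmostInvariant.toClass_le_toClass_iff (hA : AlmostInvariant F A)
    (hB : AlmostInvariant F B) : hA.toClass ≤ hB.toClass ↔ (A \ B).Finite :=
  pfinMk_le_iff

end InvariantClasses

namespace LineDecomposition

variable {F : ℕ → ℕ} (D : LineDecomposition F)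

/-- The class of an end: the class of the ray converging to it. -/
def endClass (e : D.End) : invariantClasses F :=
  ((D.isRay_ray e).almostInvariant_range D.injective).toClass

theorem endClass_le_iff {A : Set ℕ} (hA : AlmostInvariant F A) (e : D.End) :
    D.endClass e ≤ hA.toClass ↔ ∀ᶠ k in atTop, D.ray e k ∈ A :=
  pfinMk_range_le_iff (D.isRay_ray e).injective

theorem endClass_ne_bot (e : D.End) : D.endClass e ≠ ⊥ :=
  (AlmostInvariant.toClass_eq_bot_iff _).not.2
    (infinite_range_of_injective (D.isRay_ray e).injective)

theorem endClass_injective : Function.Injective D.endClass := fun e e' h ↦ by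
  obtain ⟨k, l, hkl⟩ := ((D.endClass_le_iff _ e).1 h.le).exists
  exact (D.ray_injective2 hkl).1.symm

theorem isAtom_endClass (e : D.End) : IsAtom (D.endClass e) := by
  refine isAtom_iff_le_of_ge.2 ⟨D.endClass_ne_bot e, fun b hbot hle ↦ ?_⟩
  obtain ⟨A, hA, rfl⟩ := exists_toClass_eq b
  refine (D.endClass_le_iff hA e).2 ((D.isRay_ray e).eventually_mem_of_infinite hA fun hfin ↦ ?_)
  have hsdiff : (A \ range (D.ray e)).Finite := (hA.toClass_le_toClass_iff _).1 hle
  exact hbot (hA.toClass_eq_bot_iff.2 (inter_union_sdiff A (range (D.ray e)) ▸ hfin.union hsdiff))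

theorem exists_endClass_eq_of_isAtom {a : invariantClasses F} (ha : IsAtom a) :
    ∃ e, D.endClass e = a := by
  obtain ⟨A, hA, rfl⟩ := exists_toClass_eq a
  have hfin : (Quot.mk (F · = ·) '' A).Finite := by
    by_contra hinf
    obtain ⟨B, hBA, hB, hBinf, hAB⟩ := hA.exists_infinite_sdiff_infinite hinf
    have hBA' : hB.toClass ≤ hA.toClass :=
      (hB.toClass_le_toClass_iff hA).2 (sdiff_eq_empty.2 hBA ▸ finite_empty)
    exact hAB <| (hA.toClass_le_toClass_iff hB).1 <|
      (isAtom_iff_le_of_ge.1 ha).2 _ (hB.toClass_eq_bot_iff.not.2 hBinf) hBA'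
  obtain ⟨e, he⟩ := D.exists_eventually_ray_mem hA (hA.toClass_eq_bot_iff.not.1 ha.1) hfin
  exact ⟨e, (ha.le_iff_eq (D.endClass_ne_bot e)).1 ((D.endClass_le_iff hA e).2 he)⟩

theorem isAtomPairing_endClass : IsAtomPairing D.endClass D.opposite where
  injective := D.endClass_injective
  range_eq := Subset.antisymm (range_subset_iff.2 D.isAtom_endClass)
    fun _ ↦ D.exists_endClass_eq_of_isAtom
  involutive := D.opposite_involutive
  finite_split x := by
    obtain ⟨A, hA, rfl⟩ := exists_toClass_eq x
    simpa only [endClass_le_iff] using D.finite_setOf_eventually_mem_not_opposite hA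
  exists_le_iff_mem {S} hS := by
    obtain ⟨A, hA, hAS⟩ := D.exists_almostInvariant_forall_ray_mem_iff hS
    exact ⟨hA.toClass, fun e ↦ by simp only [endClass_le_iff, hAS, eventually_const]⟩

theorem ncard_fixedPoints_opposite :
    (Function.fixedPoints D.opposite).ncard = (range F)ᶜ.ncard := by
  rw [D.fixedPoints_opposite, ← image_univ, ncard_image_of_injective _ Sum.inr_injective,
    ncard_univ, Nat.card_coe_set_eq]

theorem finite_fixedPoints_opposite (hF : (range F)ᶜ.Finite) :
    (Function.fixedPoints D.opposite).Finite := by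
  have := hF.to_subtype
  exact D.fixedPoints_opposite ▸ finite_range _

end LineDecomposition

theorem ncard_compl_range_modEq {F G : ℕ → ℕ} (hF : Function.Injective F)
    (hG : Function.Injective G) (hFfin : (range F)ᶜ.Finite) (hGfin : (range G)ᶜ.Finite)
    (Φ : invariantClasses F ≃o invariantClasses G) :
    (range F)ᶜ.ncard ≡ (range G)ᶜ.ncard [MOD 2] := by
  obtain ⟨D⟩ := nonempty_lineDecomposition hF
  obtain ⟨D'⟩ := nonempty_lineDecomposition hG
  rw [← D.ncard_fixedPoints_opposite, ← D'.ncard_fixedPoints_opposite]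
  exact D.isAtomPairing_endClass.ncard_fixedPoints_modEq D'.isAtomPairing_endClass Φ
    (D.finite_fixedPoints_opposite hFfin) (D'.finite_fixedPoints_opposite hGfin)

/-! ### Almost permutations and their fixed subalgebras -/

section CofiniteMaps

variable {X Y : Type*} {f : X → Y} {s : Set X}

theorem map_cofinite_eq_cofinite (hf : InjOn f s) (hs : sᶜ.Finite) (hfs : (f '' s)ᶜ.Finite) :
    map f cofinite = cofinite := by
  refine le_antisymm (fun t ht ↦ ?_) fun t ht ↦ ?_
  · have hpre : (s ∩ f ⁻¹' tᶜ).Finite :=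
      Set.Finite.of_finite_image ((mem_cofinite.1 ht).subset (by grind)) (hf.mono inter_subset_left)
    exact mem_cofinite.2 ((hpre.union hs).subset (by grind))
  · exact mem_cofinite.2 ((hfs.union (Set.Finite.image f ht)).subset (by grind))

theorem exists_injective_eqOn [Nonempty Y] (hf : InjOn f s) (hs : sᶜ.Finite)
    (hcard : sᶜ.ncard ≤ (f '' s)ᶜ.ncard) (hfs : (f '' s)ᶜ.Finite) :
    ∃ F : X → Y, Function.Injective F ∧ EqOn F f s ∧ (range F)ᶜ ⊆ (f '' s)ᶜ ∧
      (range F)ᶜ.ncard + sᶜ.ncard = (f '' s)ᶜ.ncard := by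
  classical
  obtain ⟨g, hgmaps, hginj⟩ := hs.exists_injOn_of_encard_le (t := (f '' s)ᶜ) <| by
    rw [← hs.cast_ncard_eq, ← hfs.cast_ncard_eq]
    exact_mod_cast hcard
  have hrange : (range (s.piecewise f g))ᶜ = (f '' s)ᶜ \ g '' sᶜ := by
    rw [range_piecewise, compl_union, sdiff_eq]
  refine ⟨s.piecewise f g, (injective_piecewise_iff s).2 ⟨hf, hginj, fun x hx y hy h ↦ ?_⟩,
    piecewise_eqOn s f g, hrange ▸ sdiff_subset, ?_⟩
  · exact hgmaps hy ⟨x, hx, h⟩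
  · rw [hrange, ← hginj.ncard_image,
      ncard_sdiff_add_ncard_of_subset (image_subset_iff.2 hgmaps) hfs]

end CofiniteMaps

theorem AlmostInvariant.congr {X : Type*} {F G : X → X} (h : F =ᶠ[cofinite] G) {A : Set X} :
    AlmostInvariant F A ↔ AlmostInvariant G A :=
  eventually_congr <| h.mono fun x hx ↦ by rw [hx]

namespace AlmostPerm

variable (f : AlmostPerm)

theorem eventually_mem_dom : ∀ᶠ n in cofinite, n ∈ f.dom := f.cofinite_dom

theorem map_toFun_cofinite : map f.toFun cofinite = cofinite :=
  map_cofinite_eq_cofinite f.injOn f.cofinite_dom f.cofinite_ran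

theorem pfinMk_image_eq_iff {A : Set ℕ} :
    pfinMk (f.image A) = pfinMk A ↔ AlmostInvariant f.toFun A := by
  rw [pfinMk_eq_iff, ← f.map_toFun_cofinite, eventually_map]
  refine eventually_congr (f.eventually_mem_dom.mono fun x hx ↦ ?_)
  rw [image, f.injOn.mem_image_iff inter_subset_right hx, mem_inter_iff, and_iff_left hx,
    iff_comm (a := x ∈ A)]

theorem fixedPoints_eq_invariantClasses {F : ℕ → ℕ}
    (hF : ∀ A, AlmostInvariant F A ↔ AlmostInvariant f.toFun A) {α : PFin → PFin}
    (hα : ∀ A, α (pfinMk A) = pfinMk (f.image A)) :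
    Function.fixedPoints α = invariantClasses F := by
  have hfix (A : Set ℕ) : pfinMk A ∈ Function.fixedPoints α ↔ AlmostInvariant F A := by
    rw [Function.mem_fixedPoints, Function.IsFixedPt, hα, pfinMk_image_eq_iff, hF]
  rw [← image_preimage_eq (Function.fixedPoints α) pfinMk_surjective]
  exact congrArg (pfinMk '' ·) (ext hfix)

/-- The inverse almost permutation. -/
noncomputable def inverse : AlmostPerm where
  dom := f.ran
  toFun := Function.invFunOn f.toFun f.dom
  cofinite_dom := f.cofinite_ran
  injOn := Function.invFunOn_injOn_image f.toFun f.dom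
  cofinite_ran := by
    rw [ran, f.injOn.invFunOn_image Subset.rfl]
    exact f.cofinite_dom

theorem ran_inverse : f.inverse.ran = f.dom := f.injOn.invFunOn_image Subset.rfl

theorem index_inverse : f.inverse.index = -f.index := by
  rw [index, index, ran_inverse, neg_sub]
  rfl

theorem almostInvariant_inverse_iff {A : Set ℕ} :
    AlmostInvariant f.inverse.toFun A ↔ AlmostInvariant f.toFun A := by
  rw [AlmostInvariant, ← f.map_toFun_cofinite, eventually_map]
  refine eventually_congr (f.eventually_mem_dom.mono fun x hx ↦ ?_)
  have hinv : f.inverse.toFun (f.toFun x) = x := f.injOn.leftInvOn_invFunOn hx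
  rw [hinv, iff_comm (a := x ∈ A)]

theorem index_eq_ncard_sub_ncard : f.index = (f.domᶜ.ncard : ℤ) - f.ranᶜ.ncard := by
  rw [index, Nat.card_coe_set_eq, Nat.card_coe_set_eq]

theorem exists_injective_of_index_nonpos (hf : f.index ≤ 0) :
    ∃ F : ℕ → ℕ, Function.Injective F ∧ (range F)ᶜ.Finite ∧ (range F)ᶜ.ncard = f.index.natAbs ∧
      ∀ A, AlmostInvariant F A ↔ AlmostInvariant f.toFun A := by
  rw [index_eq_ncard_sub_ncard] at hf ⊢
  obtain ⟨F, hF, heq, hsub, hcard⟩ := exists_injective_eqOn f.injOn f.cofinite_dom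
    (show f.domᶜ.ncard ≤ f.ranᶜ.ncard by lia) f.cofinite_ran
  change _ = f.ranᶜ.ncard at hcard
  exact ⟨F, hF, f.cofinite_ran.subset hsub, by lia,
    fun A ↦ AlmostInvariant.congr (f.eventually_mem_dom.mono heq)⟩

theorem exists_injective :
    ∃ F : ℕ → ℕ, Function.Injective F ∧ (range F)ᶜ.Finite ∧ (range F)ᶜ.ncard = f.index.natAbs ∧
      ∀ A, AlmostInvariant F A ↔ AlmostInvariant f.toFun A := by
  rcases le_total f.index 0 with h | h
  · exact f.exists_injective_of_index_nonpos h
  · simpa only [index_inverse, Int.natAbs_neg, almostInvariant_inverse_iff] using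
      f.inverse.exists_injective_of_index_nonpos (by rwa [index_inverse, neg_nonpos])

end AlmostPerm

/-- An order isomorphism conjugating `α` to `β` restricts to their fixed points. -/
def fixedPointsOrderIso {P Q : Type*} [LE P] [LE Q] {α : P → P} {β : Q → Q} (γ : P ≃o Q)
    (h : Function.Semiconj γ α β) : Function.fixedPoints α ≃o Function.fixedPoints β where
  toEquiv := γ.toEquiv.subtypeEquiv fun x ↦ by
    change α x = x ↔ β (γ x) = γ x
    rw [← h, γ.injective.eq_iff]
  map_rel_iff' := γ.le_iff_le

theorem not_conjugate_of_ne_parity_general (f g : AlmostPerm)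
    (hpar : f.index % 2 ≠ g.index % 2) (αf αg : PFin → PFin)
    (hαf : ∀ A : Set ℕ, αf (pfinMk A) = pfinMk (f.image A))
    (hαg : ∀ A : Set ℕ, αg (pfinMk A) = pfinMk (g.image A)) :
    IsEmpty (Function.fixedPoints αf ≃o Function.fixedPoints αg) := by
  refine ⟨fun Φ ↦ hpar ?_⟩
  obtain ⟨F, hF, hFfin, hFcard, hFinv⟩ := f.exists_injective
  obtain ⟨G, hG, hGfin, hGcard, hGinv⟩ := g.exists_injective
  rw [f.fixedPoints_eq_invariantClasses hFinv hαf,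
    g.fixedPoints_eq_invariantClasses hGinv hαg] at Φ
  have hmod : f.index.natAbs % 2 = g.index.natAbs % 2 :=
    hFcard ▸ hGcard ▸ ncard_compl_range_modEq hF hG hFfin hGfin Φ
  lia

/-- Trivial automorphisms whose indices have different
parities are not conjugate: no automorphism `γ` of `P(ℕ)/Fin` satisfies
`γ∘α_f = α_g∘γ`. -/
theorem not_conjugate_of_ne_parity (f g : AlmostPerm)
    (hpar : f.index % 2 ≠ g.index % 2)
    (αf αg : PFin → PFin)
    (hαf : ∀ A : Set ℕ, αf (pfinMk A) = pfinMk (f.image A))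
    (hαg : ∀ A : Set ℕ, αg (pfinMk A) = pfinMk (g.image A)) :
    ¬ ∃ γ : PFin ≃o PFin, ∀ x : PFin, γ (αf x) = αg (γ x) := by
  rintro ⟨γ, hγ⟩
  exact (not_conjugate_of_ne_parity_general f g hpar αf αg hαf hαg).false
    (fixedPointsOrderIso γ hγ)
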